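/- arXiv:2201.12118 — 3 statements merged into one kernel-verified Lean document; each statement's English description precedes it below -/
import Mathlib

section
/- Let 𝓔 be a locally finite subset of [0,∞) with weight function ω : 𝓔 → (0,∞), growth function ω̃(t) = Σ_{x∈𝓔, x≤t} ω(x), and suppose ω̃(t) ~ c t^α e^{δt} as t → ∞ for some c, δ > 0, α ∈ ℝ. Then for all real a < b, Σ_{x,y∈𝓔: x,y≤N, a ≤ y-x ≤ b} ω(x)ω(y) ~ (δ/2) ω̃(N)² ∫_a^b e^{-δ|t|} dt as N → ∞. -/
open Filter Real
open MeasureTheory Topology Set ENNReal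

/-- Convergence of all distribution functions implies weak convergence. -/
lemma weak_of_cdf {P : ℕ → ProbabilityMeasure ℝ} {Q : ProbabilityMeasure ℝ}
    (h : ∀ s : ℝ, Tendsto (fun n => (P n : Measure ℝ).real (Iic s)) atTop
      (𝓝 ((Q : Measure ℝ).real (Iic s)))) : Tendsto P atTop (𝓝 Q) := by
  have hI : ∀ (R : ProbabilityMeasure ℝ) (u v : ℝ), u < v →
      ((R (Ioc u v) : NNReal) : ℝ) =
        (R : Measure ℝ).real (Iic v) - (R : Measure ℝ).real (Iic u) := by
    intro R u v huv
    have : Ioc u v = Iic v \ Iic u := by ext; simp [and_comm]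
    rw [this]
    rw [← measureReal_sdiff (Iic_subset_Iic.2 huv.le) measurableSet_Iic]
    rfl
  refine IsPiSystem.tendsto_probabilityMeasure_of_tendsto_of_mem
    (S := {S | ∃ l u : ℝ, l < u ∧ Ioc l u = S}) ?_ ?_ ?_ ?_
  · simpa using isPiSystem_Ioc (id : ℝ → ℝ) (id : ℝ → ℝ)
  · rintro _ ⟨l, u, _, rfl⟩
    exact measurableSet_Ioc
  · intro u hu x hx
    obtain ⟨ε, hε, hb⟩ := Metric.isOpen_iff.1 hu x hx
    refine ⟨Ioc (x - ε/2) (x + ε/2), ⟨_, _, by linarith, rfl⟩,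
      Ioc_mem_nhds (by linarith) (by linarith), fun y hy => hb ?_⟩
    rw [Metric.mem_ball, Real.dist_eq, abs_lt]
    constructor <;> linarith [hy.1, hy.2]
  · rintro _ ⟨l, u, hlu, rfl⟩
    rw [← NNReal.tendsto_coe]
    simp_rw [hI _ _ _ hlu]
    exact (h u).sub (h l)

/-- Density of the reflected exponential law. -/
noncomputable def rexpPDF (δ t : ℝ) : ℝ≥0∞ :=
  (Iic (0:ℝ)).indicator (fun t => ENNReal.ofReal (δ * Real.exp (δ * t))) t

lemma measurable_rexpPDF (δ : ℝ) : Measurable (rexpPDF δ) := by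
  unfold rexpPDF
  exact Measurable.indicator (by fun_prop) measurableSet_Iic

lemma lintegral_exp_Iic {δ : ℝ} (hδ : 0 < δ) (k s : ℝ) (hk : 0 ≤ k) :
    ∫⁻ t in Iic s, ENNReal.ofReal (k * Real.exp (δ * t)) =
      ENNReal.ofReal (k * (Real.exp (δ * s) / δ)) := by
  rw [← ofReal_integral_eq_lintegral_ofReal]
  · rw [integral_const_mul, integral_exp_mul_Iic hδ]
  · exact (integrableOn_exp_mul_Iic hδ s).const_mul k
  · exact Eventually.of_forall fun t => by positivity

/-- The reflected exponential law. -/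
noncomputable def rexpM (δ : ℝ) : Measure ℝ := volume.withDensity (rexpPDF δ)

lemma rexpM_Iic {δ : ℝ} (hδ : 0 < δ) (s : ℝ) :
    rexpM δ (Iic s) = ENNReal.ofReal (Real.exp (δ * min s 0)) := by
  rw [rexpM, withDensity_apply _ measurableSet_Iic]
  unfold rexpPDF
  rw [lintegral_indicator measurableSet_Iic, Measure.restrict_restrict measurableSet_Iic,
    Iic_inter_Iic, lintegral_exp_Iic hδ _ _ hδ.le]
  congr 1
  rw [min_comm]
  field_simp

lemma rexpM_prob {δ : ℝ} (hδ : 0 < δ) : IsProbabilityMeasure (rexpM δ) := by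
  constructor
  rw [rexpM, withDensity_apply _ MeasurableSet.univ, Measure.restrict_univ]
  unfold rexpPDF
  rw [lintegral_indicator measurableSet_Iic, lintegral_exp_Iic hδ _ _ hδ.le]
  simp [hδ.ne']

lemma rexp_corr {δ : ℝ} (hδ : 0 < δ) (t : ℝ) :
    ∫⁻ x, rexpPDF δ x * rexpPDF δ (x + t) = ENNReal.ofReal (δ / 2 * Real.exp (-δ * |t|)) := by
  have : ∀ x, rexpPDF δ x * rexpPDF δ (x + t) = (Iic (min 0 (-t))).indicator
      (fun x => ENNReal.ofReal (δ ^ 2 * Real.exp (δ * t) * Real.exp ((2 * δ) * x))) x := by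
    intro x
    unfold rexpPDF
    by_cases h1 : x ≤ 0
    · by_cases h2 : x + t ≤ 0
      · rw [indicator_of_mem (by exact h1), indicator_of_mem (by exact h2),
          indicator_of_mem (by simp only [mem_Iic, le_min_iff]; constructor <;> linarith),
          ← ENNReal.ofReal_mul (by positivity)]
        congr 1
        rw [show δ * (x + t) = δ * x + δ * t by ring, show 2 * δ * x = δ * x + δ * x by ring,
          Real.exp_add, Real.exp_add]
        ring
      · rw [indicator_of_notMem (s := Iic (0:ℝ)) (a := x + t) (by exact h2), mul_zero,
          indicator_of_notMem]
        simp only [mem_Iic, le_min_iff, not_and]; intro _ h; exact h2 (by linarith)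
    · rw [indicator_of_notMem (s := Iic (0:ℝ)) (a := x) (by exact h1), zero_mul,
          indicator_of_notMem]
      simp only [mem_Iic, le_min_iff, not_and]; intro h; exact absurd h h1
  simp_rw [this]
  rw [lintegral_indicator measurableSet_Iic, lintegral_exp_Iic (by positivity) _ _ (by positivity)]
  congr 1
  have : Real.exp (-δ * |t|) = Real.exp (δ * t) * Real.exp (2 * δ * min 0 (-t)) := by
    rw [← Real.exp_add]
    congr 1
    rcases le_total 0 t with h | h
    · rw [abs_of_nonneg h, min_eq_right (by linarith)]; ring
    · rw [abs_of_nonpos h, min_eq_left (by linarith)]; ring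
  rw [this]
  field_simp

lemma rexp_diff {δ : ℝ} (hδ : 0 < δ) {a b : ℝ} (hab : a ≤ b) :
    ((rexpM δ).prod (rexpM δ)) {p | a ≤ p.2 - p.1 ∧ p.2 - p.1 ≤ b} =
      ENNReal.ofReal (δ / 2 * ∫ t in a..b, Real.exp (-δ * |t|)) := by
  have := rexpM_prob hδ
  have hm := measurable_rexpPDF δ
  have hS : MeasurableSet {p : ℝ × ℝ | a ≤ p.2 - p.1 ∧ p.2 - p.1 ≤ b} :=
    (measurableSet_Icc (a := a) (b := b)).preimage (measurable_snd.sub measurable_fst)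
  rw [Measure.prod_apply hS]
  have h1 : ∀ x, rexpM δ (Prod.mk x ⁻¹' {p : ℝ × ℝ | a ≤ p.2 - p.1 ∧ p.2 - p.1 ≤ b}) =
      ∫⁻ t in Icc a b, rexpPDF δ (x + t) := by
    intro x
    rw [rexpM, withDensity_apply _ (measurable_prodMk_left hS), ← lintegral_indicator
      (measurable_prodMk_left hS), ← lintegral_add_left_eq_self _ x,
      ← lintegral_indicator measurableSet_Icc]
    congr 1; ext t
    have e : x + t ≤ b + x ↔ t ≤ b := by constructor <;> intro h <;> linarith
    simp [indicator, e]
  simp_rw [h1]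
  have hm2 : Measurable fun p : ℝ × ℝ => rexpPDF δ (p.1 + p.2) := hm.comp (by fun_prop)
  rw [rexpM, lintegral_withDensity_eq_lintegral_mul _ hm (Measurable.lintegral_prod_right hm2)]
  simp only [Pi.mul_apply]
  have h2 : ∀ x, rexpPDF δ x * ∫⁻ t in Icc a b, rexpPDF δ (x + t) =
      ∫⁻ t in Icc a b, rexpPDF δ x * rexpPDF δ (x + t) := fun x =>
    (lintegral_const_mul _ (hm.comp (measurable_const_add x))).symm
  simp_rw [h2]
  rw [lintegral_lintegral_swap]
  · simp_rw [rexp_corr hδ]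
    rw [← ofReal_integral_eq_lintegral_ofReal]
    · rw [integral_const_mul, intervalIntegral.integral_of_le hab, integral_Icc_eq_integral_Ioc]
    · exact Continuous.integrableOn_Icc (by fun_prop)
    · exact Eventually.of_forall fun t => by positivity
  · exact ((hm.comp measurable_fst).mul hm2).aemeasurable

lemma rexp_frontier {δ : ℝ} (hδ : 0 < δ) {a b : ℝ} (hab : a < b) :
    ((rexpM δ).prod (rexpM δ)) (frontier {p | a ≤ p.2 - p.1 ∧ p.2 - p.1 ≤ b}) = 0 := by
  have hz : ∀ c : ℝ, ((rexpM δ).prod (rexpM δ)) {p | c ≤ p.2 - p.1 ∧ p.2 - p.1 ≤ c} = 0 := by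
    intro c
    rw [rexp_diff hδ le_rfl]; simp
  refine measure_mono_null ?_ (measure_union_null (hz a) (hz b))
  have hc : Continuous fun p : ℝ × ℝ => p.2 - p.1 := by fun_prop
  have := hc.frontier_preimage_subset (Icc a b)
  rw [frontier_Icc hab.le] at this
  intro p hp
  rcases this hp with h | h
  · left; exact ⟨h.ge, h.le⟩
  · right; exact ⟨h.ge, h.le⟩

lemma ratio_lim (W : ℝ → ℝ) {c δ α : ℝ} (hc : 0 < c)
    (h : Tendsto (fun t => W t / (c * t ^ α * Real.exp (δ * t))) atTop (𝓝 1)) (s : ℝ) :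
    Tendsto (fun t => W (t + s) / W t) atTop (𝓝 (Real.exp (δ * s))) := by
  have hs : Tendsto (fun t : ℝ => t + s) atTop atTop := tendsto_atTop_add_const_right _ _ tendsto_id
  have h1 := (h.comp hs).div h one_ne_zero
  have h2 : Tendsto (fun t : ℝ => (t + s) / t) atTop (𝓝 1) := by
    have : Tendsto (fun t : ℝ => 1 + s / t) atTop (𝓝 (1 + 0)) :=
      tendsto_const_nhds.add (tendsto_const_nhds.div_atTop tendsto_id)
    rw [add_zero] at this
    refine this.congr' ?_
    filter_upwards [eventually_gt_atTop 0] with t ht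
    field_simp
  have h3 := (h2.rpow_const (p := α) (Or.inl one_ne_zero)).mul_const (Real.exp (δ * s))
  have h4 := h1.mul h3
  simp only [Real.one_rpow, div_one, one_mul] at h4
  refine h4.congr' ?_
  filter_upwards [eventually_gt_atTop 0, hs.eventually (eventually_gt_atTop 0)] with t ht hts
  simp only [Function.comp_apply, Pi.div_apply]
  rw [Real.div_rpow hts.le ht.le, mul_add, Real.exp_add]
  have e1 := Real.rpow_pos_of_pos ht α
  have e2 := Real.rpow_pos_of_pos hts α
  have e3 := Real.exp_pos (δ * s)
  have e4 := Real.exp_pos (δ * t)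
  by_cases hW : W t = 0
  · simp [hW]
  · field_simp

/-- The measure attached to a weighted finite set. -/
noncomputable def wM (F : Finset ℝ) (ω : ℝ → ℝ) (Z N : ℝ) : Measure ℝ :=
  ∑ x ∈ F, ENNReal.ofReal (ω x / Z) • Measure.dirac (x - N)

lemma wM_apply (F : Finset ℝ) (ω : ℝ → ℝ) (Z N : ℝ) {S : Set ℝ} (hS : MeasurableSet S) :
    wM F ω Z N S = ∑ x ∈ F, ENNReal.ofReal (ω x / Z) * S.indicator 1 (x - N) := by
  simp [wM, Measure.finsetSum_apply, Measure.dirac_apply' _ hS]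

lemma wM_prod (F : Finset ℝ) (ω : ℝ → ℝ) (Z N : ℝ) {S : Set (ℝ × ℝ)} (hS : MeasurableSet S)
    [SFinite (wM F ω Z N)] :
    ((wM F ω Z N).prod (wM F ω Z N)) S = ∑ x ∈ F, ∑ y ∈ F,
      ENNReal.ofReal (ω x / Z) * (ENNReal.ofReal (ω y / Z) * S.indicator 1 (x - N, y - N)) := by
  rw [Measure.prod_apply hS]
  have : ∀ x, wM F ω Z N (Prod.mk x ⁻¹' S) = ∑ y ∈ F, ENNReal.ofReal (ω y / Z) *
      S.indicator 1 (x, y - N) := fun x => by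
    rw [wM_apply _ _ _ _ (measurable_prodMk_left hS)]; rfl
  simp_rw [this]
  conv_lhs => rw [wM]
  rw [lintegral_finsetSum_measure]
  refine Finset.sum_congr rfl fun x _ => ?_
  rw [lintegral_smul_measure, lintegral_dirac, smul_eq_mul, Finset.mul_sum]


/-- Corollary 1.2: asymptotics of the weighted number of pairs of elements of
`𝓔 ∩ [0, N]` whose difference lies in `[a, b]`. -/
theorem pair_count_asymptotics
    (E : Set ℝ) (hE : E ⊆ Set.Ici 0) (hfin : ∀ t : ℝ, (E ∩ Set.Iic t).Finite)
    (ω : ℝ → ℝ) (hω : ∀ x ∈ E, 0 < ω x)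
    (c δ α : ℝ) (hc : 0 < c) (hδ : 0 < δ)
    (hPA : Tendsto
      (fun t : ℝ => (∑ x ∈ (hfin t).toFinset, ω x) / (c * t ^ α * Real.exp (δ * t)))
      atTop (nhds 1))
    (a b : ℝ) (hab : a < b) :
    Tendsto (fun N : ℕ =>
        (∑ x ∈ (hfin N).toFinset, ∑ y ∈ (hfin N).toFinset,
            if a ≤ y - x ∧ y - x ≤ b then ω x * ω y else 0) /
          (δ / 2 * (∑ x ∈ (hfin N).toFinset, ω x) ^ 2 *
            ∫ t in a..b, Real.exp (-δ * |t|)))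
      atTop (nhds 1) := by
  have hrat := ratio_lim (fun t => ∑ x ∈ (hfin t).toFinset, ω x) hc hPA
  set W : ℝ → ℝ := fun t => ∑ x ∈ (hfin t).toFinset, ω x with hW
  have hmem : ∀ t x, x ∈ (hfin t).toFinset ↔ x ∈ E ∧ x ≤ t := by intro t x; simp
  have hpos : ∀ t, ∀ x ∈ (hfin t).toFinset, 0 < ω x := fun t x hx => hω x ((hmem t x).1 hx).1
  have hW0 : ∀ t, 0 ≤ W t := fun t => Finset.sum_nonneg fun x hx => (hpos t x hx).le
  have hWpos : ∀ᶠ N : ℕ in atTop, 0 < W N := by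
    have h1 : ∀ᶠ t in atTop, W t / (c * t ^ α * Real.exp (δ * t)) ≠ 0 :=
      hPA.eventually_ne one_ne_zero
    filter_upwards [tendsto_natCast_atTop_atTop.eventually h1] with N hN
    refine lt_of_le_of_ne (hW0 _) fun h => hN ?_
    rw [← h, zero_div]
  have hprob : ∀ N : ℕ, 0 < W N → IsProbabilityMeasure (wM (hfin N).toFinset ω (W N) N) := by
    intro N hN
    constructor
    rw [wM_apply _ _ _ _ MeasurableSet.univ]
    simp only [indicator_univ, Pi.one_apply, mul_one]
    rw [← ENNReal.ofReal_sum_of_nonneg fun x hx => div_nonneg (hpos _ x hx).le hN.le,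
      ← Finset.sum_div]
    change ENNReal.ofReal (W N / W N) = 1
    rw [div_self hN.ne', ENNReal.ofReal_one]
  have hex : ∀ N : ℕ, ∃ P : ProbabilityMeasure ℝ, 0 < W N →
      (P : Measure ℝ) = wM (hfin N).toFinset ω (W N) N := by
    intro N
    by_cases hN : 0 < W N
    · exact ⟨⟨_, hprob N hN⟩, fun _ => rfl⟩
    · exact ⟨⟨_, rexpM_prob hδ⟩, fun h => absurd h hN⟩
  choose P hP using hex
  let Q : ProbabilityMeasure ℝ := ⟨rexpM δ, rexpM_prob hδ⟩
  have hweak : Tendsto P atTop (𝓝 Q) := by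
    apply weak_of_cdf
    intro s
    have hQ : (Q : Measure ℝ).real (Iic s) = Real.exp (δ * min s 0) := by
      change (rexpM δ (Iic s)).toReal = _
      rw [rexpM_Iic hδ, ENNReal.toReal_ofReal (Real.exp_pos _).le]
    rw [hQ]
    have hlim := (hrat (min s 0)).comp (tendsto_natCast_atTop_atTop (R := ℝ))
    refine hlim.congr' ?_
    filter_upwards [hWpos] with N hN
    rw [Function.comp_apply, Measure.real, hP N hN, wM_apply _ _ _ _ measurableSet_Iic]
    have hF : (hfin ((N : ℝ) + min s 0)).toFinset =
        (hfin (N : ℝ)).toFinset.filter (fun x : ℝ => x - (N : ℝ) ∈ Iic s) := by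
      ext x
      rw [Finset.mem_filter, hmem, hmem, mem_Iic]
      constructor
      · rintro ⟨h1, h2⟩
        exact ⟨⟨h1, by linarith [min_le_right s 0]⟩, by linarith [min_le_left s 0]⟩
      · rintro ⟨⟨h1, h2⟩, h3⟩
        have : x - N ≤ min s 0 := le_min h3 (by linarith)
        exact ⟨h1, by linarith⟩
    have e : ∀ x, ENNReal.ofReal (ω x / W N) * (Iic s).indicator 1 (x - N) =
        if x - (N : ℝ) ∈ Iic s then ENNReal.ofReal (ω x / W N) else 0 := by
      intro x; by_cases h : x - (N : ℝ) ∈ Iic s <;> simp only [indicator, h, if_true, if_false,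
        Pi.one_apply, mul_one, mul_zero]
    simp_rw [e]
    rw [← Finset.sum_filter, ← hF, ← ENNReal.ofReal_sum_of_nonneg
      fun x hx => div_nonneg (hpos _ x hx).le hN.le, ← Finset.sum_div,
      ENNReal.toReal_ofReal (div_nonneg (hW0 _) hN.le)]
  have hprodlim : Tendsto (fun N => (P N).prod (P N)) atTop (𝓝 (Q.prod Q)) :=
    (ProbabilityMeasure.continuous_prod.tendsto (Q, Q)).comp (hweak.prodMk_nhds hweak)
  have hport := ProbabilityMeasure.tendsto_measure_of_null_frontier_of_tendsto' hprodlim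
    (E := {p | a ≤ p.2 - p.1 ∧ p.2 - p.1 ≤ b}) (rexp_frontier hδ hab)
  have hS : MeasurableSet {p : ℝ × ℝ | a ≤ p.2 - p.1 ∧ p.2 - p.1 ≤ b} :=
    (measurableSet_Icc (a := a) (b := b)).preimage (measurable_snd.sub measurable_fst)
  have hIpos : 0 < ∫ t in a..b, Real.exp (-δ * |t|) :=
    intervalIntegral.intervalIntegral_pos_of_pos
      (Continuous.intervalIntegrable (by fun_prop) _ _) (fun t => Real.exp_pos _) hab
  set I := ∫ t in a..b, Real.exp (-δ * |t|) with hI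
  have hQv : ((Q.prod Q : ProbabilityMeasure (ℝ × ℝ)) : Measure (ℝ × ℝ))
      {p | a ≤ p.2 - p.1 ∧ p.2 - p.1 ≤ b} = ENNReal.ofReal (δ / 2 * I) := rexp_diff hδ hab.le
  have hreal := (ENNReal.tendsto_toReal (measure_ne_top _ _)).comp hport
  rw [hQv, ENNReal.toReal_ofReal (by positivity)] at hreal
  have hfinal := hreal.div_const (δ / 2 * I)
  rw [div_self (by positivity)] at hfinal
  refine hfinal.congr' ?_
  filter_upwards [hWpos] with N hN
  have := hprob N hN
  rw [Function.comp_apply, ProbabilityMeasure.toMeasure_prod, hP N hN, wM_prod _ _ _ _ hS]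
  have e : ∀ x ∈ (hfin N).toFinset, ∀ y ∈ (hfin N).toFinset,
      ENNReal.ofReal (ω x / W N) * (ENNReal.ofReal (ω y / W N) *
        indicator {p : ℝ × ℝ | a ≤ p.2 - p.1 ∧ p.2 - p.1 ≤ b} 1 (x - (N:ℝ), y - (N:ℝ))) =
      ENNReal.ofReal ((if a ≤ y - x ∧ y - x ≤ b then ω x * ω y else 0) / W N ^ 2) := by
    intro x hx y hy
    have h1 := hpos _ x hx
    have h2 := hpos _ y hy
    simp only [indicator, mem_ofPred_eq, sub_sub_sub_cancel_right]
    split_ifs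
    · rw [Pi.one_apply, mul_one, ← ENNReal.ofReal_mul (by positivity)]
      congr 1; field_simp
    · simp
  have hn : ∀ x ∈ (hfin N).toFinset, ∀ y ∈ (hfin N).toFinset,
      0 ≤ (if a ≤ y - x ∧ y - x ≤ b then ω x * ω y else 0) / W N ^ 2 := by
    intro x hx y hy
    have h1 := hpos _ x hx
    have h2 := hpos _ y hy
    split_ifs <;> positivity
  rw [Finset.sum_congr rfl fun x hx => Finset.sum_congr rfl (e x hx),
    Finset.sum_congr rfl fun x hx => (ENNReal.ofReal_sum_of_nonneg (hn x hx)).symm,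
    ← ENNReal.ofReal_sum_of_nonneg fun x hx => Finset.sum_nonneg (hn x hx),
    ENNReal.toReal_ofReal (Finset.sum_nonneg fun x hx => Finset.sum_nonneg (hn x hx))]
  simp_rw [← Finset.sum_div]
  change _ = _ / (δ / 2 * (W N) ^ 2 * I)
  rw [div_div]
  congr 1
  ring
end

section
/- Let 𝓔 be a locally finite subset of [0,∞) with weight function ω, and suppose ω̃(t) = Σ_{x∈𝓔,x≤t} ω(x) satisfies ω̃(t) = c e^{δt}(1 + O(e^{-κt})) as t → ∞ for some c, δ, κ > 0. Let ψ : ℕ → [1,∞) tend to +∞ with subexponential growth. For N ∈ ℕ define 𝓡_N^ψ(f) = Σ_{x,y∈𝓔∩[0,N]} ω(x)ω(y) f(ψ(N)(y-x)) and ψ'(N) = ω̃(N)²/ψ(N). Then for every C¹ function f : ℝ → ℝ with compact support, 𝓡_N^ψ(f)/ψ'(N) → (δ/2) ∫_ℝ f(t) dt as N → ∞. -/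
open Filter Real

lemma pb_abel (s : Finset ℝ) (ω g : ℝ → ℝ) (hg : ContDiff ℝ 1 g) (a T : ℝ)
    (hs : ∀ y ∈ s, a ≤ y ∧ y ≤ T) (haT : a ≤ T) :
    IntervalIntegrable (fun t => (∑ y ∈ s, if y ≤ t then ω y else 0) * deriv g t)
      MeasureTheory.volume a T ∧
    ∑ y ∈ s, ω y * g y = (∑ y ∈ s, ω y) * g T -
      ∫ t in a..T, (∑ y ∈ s, if y ≤ t then ω y else 0) * deriv g t := by
  have hd : Continuous (deriv g) := hg.continuous_deriv le_rfl
  have hI : ∀ y, IntervalIntegrable (fun t => (if y ≤ t then ω y else 0) * deriv g t)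
      MeasureTheory.volume a T := by
    intro y
    have h1 : (fun t => (if y ≤ t then ω y else 0) * deriv g t)
        = (Set.Ici y).indicator (fun t => ω y * deriv g t) := by
      ext t; simp [Set.indicator_apply]
    rw [h1, intervalIntegrable_iff]
    exact ((intervalIntegrable_iff.1 ((continuous_const.mul hd).intervalIntegrable a T))).indicator
      measurableSet_Ici
  have hJ : ∀ y ∈ s, ∫ t in a..T, (if y ≤ t then ω y else 0) * deriv g t = ω y * (g T - g y) := by
    intro y hy
    obtain ⟨h1, h2⟩ := hs y hy
    have hsub1 : IntervalIntegrable (fun t => (if y ≤ t then ω y else 0) * deriv g t)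
      MeasureTheory.volume a y := (hI y).mono_set (by
        rw [Set.uIcc_of_le h1, Set.uIcc_of_le haT]; exact Set.Icc_subset_Icc le_rfl h2)
    have hsub2 : IntervalIntegrable (fun t => (if y ≤ t then ω y else 0) * deriv g t)
      MeasureTheory.volume y T := (hI y).mono_set (by
        rw [Set.uIcc_of_le h2, Set.uIcc_of_le haT]; exact Set.Icc_subset_Icc h1 le_rfl)
    rw [← intervalIntegral.integral_add_adjacent_intervals hsub1 hsub2]
    have e1 : ∫ t in a..y, (if y ≤ t then ω y else 0) * deriv g t = 0 := by
      rw [intervalIntegral.integral_of_le h1, MeasureTheory.integral_Ioc_eq_integral_Ioo]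
      rw [MeasureTheory.setIntegral_congr_fun (g := fun _ => (0:ℝ)) measurableSet_Ioo]
      · simp
      · intro t ht
        simp [not_le.2 ht.2]
    have e2 : ∫ t in y..T, (if y ≤ t then ω y else 0) * deriv g t = ω y * (g T - g y) := by
      rw [intervalIntegral.integral_congr (g := fun t => ω y * deriv g t)]
      · rw [intervalIntegral.integral_const_mul,
          intervalIntegral.integral_deriv_eq_sub (fun x _ => (hg.differentiable one_ne_zero) x)
          (hd.intervalIntegrable _ _)]
      · intro t ht
        rw [Set.uIcc_of_le h2] at ht
        simp [ht.1]
    rw [e1, e2, zero_add]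
  simp_rw [Finset.sum_mul]
  have hsum := IntervalIntegrable.sum s (fun y _ => hI y)
  constructor
  · have e : (∑ y ∈ s, fun t => (if y ≤ t then ω y else 0) * deriv g t) =
        fun t => ∑ y ∈ s, (if y ≤ t then ω y else 0) * deriv g t := by
      ext t; simp
    rw [e] at hsum
    exact hsum
  · rw [intervalIntegral.integral_finsetSum (fun y _ => hI y), Finset.sum_congr rfl hJ,
      ← Finset.sum_sub_distrib]
    exact Finset.sum_congr rfl (fun y _ => by ring)

lemma pb_abel2 (s : Finset ℝ) (ω g : ℝ → ℝ) (hg : ContDiff ℝ 1 g) (a T c δ B : ℝ)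
    (hs : ∀ y ∈ s, a < y ∧ y ≤ T) (haT : a ≤ T)
    (hB : ∀ t, a ≤ t → t ≤ T → |(∑ y ∈ s, if y ≤ t then ω y else 0) - c * exp (δ * t)| ≤ B) :
    |∑ y ∈ s, ω y * g y - ∫ t in a..T, c * δ * exp (δ * t) * g t| ≤
      B * (|g T| + |g a| + ∫ t in a..T, |deriv g t|) := by
  have hd : Continuous (deriv g) := hg.continuous_deriv le_rfl
  obtain ⟨hi, he⟩ := pb_abel s ω g hg a T (fun y hy => ⟨(hs y hy).1.le, (hs y hy).2⟩) haT
  have hM : ∀ t, HasDerivAt (fun t => c * exp (δ * t)) (c * δ * exp (δ * t)) t := by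
    intro t
    have h0 : HasDerivAt (fun t => δ * t) δ t := by
      simpa using (hasDerivAt_id t).const_mul δ
    have := h0.exp.const_mul c
    have e : c * δ * exp (δ * t) = c * (exp (δ * t) * δ) := by ring
    rw [e]
    exact this
  have hip := intervalIntegral.integral_mul_deriv_eq_deriv_mul (a := a) (b := T)
    (u := fun t => c * exp (δ * t)) (v := g) (u' := fun t => c * δ * exp (δ * t)) (v' := deriv g)
    (fun t _ => hM t) (fun t _ => (hg.differentiable one_ne_zero t).hasDerivAt)
    ((by fun_prop : Continuous _).intervalIntegrable _ _) (hd.intervalIntegrable _ _)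
  have hi2 : IntervalIntegrable (fun t => c * exp (δ * t) * deriv g t) MeasureTheory.volume a T :=
    (by fun_prop : Continuous _).intervalIntegrable _ _
  have hsub := intervalIntegral.integral_sub hi hi2
  have hFT : (∑ y ∈ s, if y ≤ T then ω y else 0) = ∑ y ∈ s, ω y :=
    Finset.sum_congr rfl (fun y hy => by simp [(hs y hy).2])
  have hFa : (∑ y ∈ s, if y ≤ a then ω y else 0) = 0 :=
    Finset.sum_eq_zero (fun y hy => by simp [(hs y hy).1])
  have bT := hB T haT le_rfl
  have ba := hB a le_rfl haT
  rw [hFT] at bT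
  rw [hFa, zero_sub, abs_neg] at ba
  have bI : |∫ t in a..T, ((∑ y ∈ s, if y ≤ t then ω y else 0) * deriv g t
      - c * exp (δ * t) * deriv g t)| ≤ B * ∫ t in a..T, |deriv g t| := by
    rw [← intervalIntegral.integral_const_mul]
    apply (intervalIntegral.abs_integral_le_integral_abs haT).trans
    apply intervalIntegral.integral_mono_on haT (hi.sub hi2).abs
      ((by fun_prop : Continuous _).intervalIntegrable _ _)
    intro t ht
    rw [← sub_mul, abs_mul]
    exact mul_le_mul_of_nonneg_right (hB t ht.1 ht.2) (abs_nonneg _)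
  have key : ∑ y ∈ s, ω y * g y - ∫ t in a..T, c * δ * exp (δ * t) * g t =
      ((∑ y ∈ s, ω y) - c * exp (δ * T)) * g T + (c * exp (δ * a)) * g a -
      ∫ t in a..T, ((∑ y ∈ s, if y ≤ t then ω y else 0) * deriv g t
      - c * exp (δ * t) * deriv g t) := by
    rw [hsub, he, hip]; ring
  rw [key]
  calc _ ≤ |((∑ y ∈ s, ω y) - c * exp (δ * T)) * g T| + |(c * exp (δ * a)) * g a| + |_| :=
        (abs_sub _ _).trans (add_le_add_left (abs_add_le _ _) _)
    _ ≤ B * |g T| + B * |g a| + B * ∫ t in a..T, |deriv g t| := by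
        rw [abs_mul, abs_mul]
        gcongr
    _ = _ := by ring

/-- Riemann-type estimate for the shifted bump. -/
lemma pb_bump (f : ℝ → ℝ) (hf : ContDiff ℝ 1 f) (A K : ℝ) (hA : 0 < A)
    (hsupp : ∀ u, A ≤ |u| → f u = 0) (hK : ∀ u, |f u| ≤ K)
    (p x T : ℝ) (hp : 1 ≤ p) (hx : 0 ≤ x) (hxT : x ≤ T) :
    ∫ t in (-A)..T, |deriv (fun t => f (p * (t - x))) t| ≤ ∫ u, |deriv f u| := by
  have hp0 : 0 < p := by linarith
  have hcs : HasCompactSupport f := HasCompactSupport.intro (isCompact_Icc (a := -A) (b := A))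
    (fun u hu => hsupp u (by
      by_contra h; push Not at h
      exact hu ⟨(abs_lt.1 h).1.le, (abs_lt.1 h).2.le⟩))
  have hd : Continuous (deriv f) := hf.continuous_deriv le_rfl
  have h1 : ∀ t, deriv (fun t => f (p * (t - x))) t = p * deriv f (p * (t - x)) := by
    intro t
    have h2 : HasDerivAt (fun t => p * (t - x)) p t := by
      simpa using ((hasDerivAt_id t).sub_const x).const_mul p
    have h3 := (hf.differentiable one_ne_zero (p * (t - x))).hasDerivAt.comp t h2
    rw [mul_comm]
    exact h3.deriv
  simp_rw [h1, abs_mul, abs_of_pos hp0]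
  have hint : MeasureTheory.Integrable (fun u => |deriv f u|) :=
    (hd.integrable_of_hasCompactSupport hcs.deriv).abs
  have h4 : ∫ t in (-A)..T, p * |deriv f (p * (t - x))| =
      ∫ u in (p * (-A) - p * x)..(p * T - p * x), |deriv f u| := by
    have := intervalIntegral.mul_integral_comp_mul_sub (a := -A) (b := T)
      (f := fun u => |deriv f u|) (c := p) (d := p * x)
    rw [← this, intervalIntegral.integral_const_mul]
    simp_rw [mul_sub]
  rw [h4, intervalIntegral.integral_of_le (by nlinarith)]
  exact MeasureTheory.setIntegral_le_integral hint (Filter.Eventually.of_forall (fun _ => abs_nonneg _))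

lemma pb_riem (f : ℝ → ℝ) (hf : Continuous f) (A : ℝ) (hA : 0 < A)
    (hsupp : ∀ u, A ≤ |u| → f u = 0)
    (p x T c δ : ℝ) (hp : 1 ≤ p) (hx : 0 ≤ x) (hxT : x ≤ T) (hc : 0 < c) (hδ : 0 < δ) :
    (x + A / p ≤ T → |p * (∫ t in (-A)..T, c * δ * exp (δ * t) * f (p * (t - x)))
      - c * δ * exp (δ * x) * ∫ u, f u| ≤
        c * δ * exp (δ * x) * ((exp (δ * A / p) - 1) * ∫ u, |f u|)) ∧
    |p * (∫ t in (-A)..T, c * δ * exp (δ * t) * f (p * (t - x)))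
      - c * δ * exp (δ * x) * ∫ u, f u| ≤
        c * δ * exp (δ * x) * ((exp (δ * A) + 1) * ∫ u, |f u|) := by
  have hp0 : 0 < p := by linarith
  have hcs : HasCompactSupport f := HasCompactSupport.intro (isCompact_Icc (a := -A) (b := A))
    (fun u hu => hsupp u (by
      by_contra h; push Not at h
      exact hu ⟨(abs_lt.1 h).1.le, (abs_lt.1 h).2.le⟩))
  have hfi : MeasureTheory.Integrable f := hf.integrable_of_hasCompactSupport hcs
  have hcont : Continuous (fun u => exp (δ * u / p) * f u) := by fun_prop
  have hcs2 : HasCompactSupport (fun u => exp (δ * u / p) * f u) := hcs.mul_left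
  have hgi : MeasureTheory.Integrable (fun u => exp (δ * u / p) * f u) :=
    hcont.integrable_of_hasCompactSupport hcs2
  have hsub : p * (∫ t in (-A)..T, c * δ * exp (δ * t) * f (p * (t - x))) =
      c * δ * exp (δ * x) *
        ∫ u in (p * (-A) - p * x)..(p * T - p * x), exp (δ * u / p) * f u := by
    have := intervalIntegral.mul_integral_comp_mul_sub (a := -A) (b := T)
      (f := fun u => exp (δ * u / p) * f u) (c := p) (d := p * x)
    rw [← this, mul_left_comm]
    congr 1
    rw [← intervalIntegral.integral_const_mul]
    refine intervalIntegral.integral_congr (fun t _ => ?_)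
    have e : exp (δ * t) = exp (δ * x) * exp (δ * (p * t - p * x) / p) := by
      rw [← exp_add]; congr 1; field_simp; ring
    simp only [mul_sub p t x, e]; ring
  have hpos : 0 < c * δ * exp (δ * x) := by positivity
  rw [hsub, ← mul_sub, abs_mul, abs_of_pos hpos]
  have hfa : 0 ≤ ∫ u, |f u| := MeasureTheory.integral_nonneg (fun _ => abs_nonneg _)
  constructor
  · intro hxA
    gcongr
    have e1 : ∫ u in (p * (-A) - p * x)..(p * T - p * x), exp (δ * u / p) * f u
        = ∫ u, exp (δ * u / p) * f u := by
      apply intervalIntegral.integral_eq_integral_of_support_subset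
      intro u hu
      have hfu : f u ≠ 0 := by
        intro h; apply hu; simp [h]
      have hlt : |u| < A := by
        by_contra h; exact hfu (hsupp u (not_lt.1 h))
      have h5 : p * (x + A / p) ≤ p * T := by gcongr
      have h6 : p * (x + A / p) = p * x + A := by field_simp
      rw [abs_lt] at hlt
      constructor <;> nlinarith
    rw [e1, ← MeasureTheory.integral_sub hgi hfi, ← MeasureTheory.integral_const_mul]
    apply (MeasureTheory.abs_integral_le_integral_abs).trans
    apply MeasureTheory.integral_mono (hgi.sub hfi).abs (hfi.abs.const_mul _)
    intro u
    by_cases hu : A ≤ |u|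
    · simp [hsupp u hu]
    · push Not at hu
      have hu' := abs_lt.1 hu
      change |exp (δ * u / p) * f u - f u| ≤ (exp (δ * A / p) - 1) * |f u|
      rw [← sub_one_mul, abs_mul]
      gcongr
      have h7 : exp (δ * u / p) ≤ exp (δ * A / p) := by gcongr; exact hu'.2.le
      have h8 : exp (-(δ * A / p)) ≤ exp (δ * u / p) := by
        rw [← neg_div, ← mul_neg]; gcongr; exact hu'.1.le
      have h9 : 1 - exp (-(δ * A / p)) ≤ exp (δ * A / p) - 1 := by
        have a1 := add_one_le_exp (δ * A / p)
        have a2 := add_one_le_exp (-(δ * A / p))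
        linarith
      rw [abs_le]; constructor <;> linarith
  · gcongr
    rw [intervalIntegral.integral_of_le (by nlinarith), add_mul, one_mul]
    refine (abs_sub _ _).trans (add_le_add ?_ MeasureTheory.abs_integral_le_integral_abs)
    apply (MeasureTheory.abs_integral_le_integral_abs).trans
    apply (MeasureTheory.setIntegral_le_integral hgi.abs (Filter.Eventually.of_forall (fun _ => abs_nonneg _))).trans
    rw [← MeasureTheory.integral_const_mul]
    apply MeasureTheory.integral_mono hgi.abs (hfi.abs.const_mul _)
    intro u
    by_cases hu : A ≤ |u|
    · simp [hsupp u hu]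
    · push Not at hu
      simp only
      rw [abs_mul, abs_of_pos (exp_pos _)]
      gcongr
      have : δ * u / p ≤ δ * A / p := by gcongr; exact (abs_lt.1 hu).2.le
      exact this.trans (div_le_self (by positivity) hp)

lemma pb_expsum (s : Finset ℝ) (ω : ℝ → ℝ) (A T c δ B : ℝ) (hδ : 0 < δ)
    (hs : ∀ y ∈ s, -A < y ∧ y ≤ T) (haT : -A ≤ T)
    (hB : ∀ t, -A ≤ t → t ≤ T → |(∑ y ∈ s, if y ≤ t then ω y else 0) - c * exp (δ * t)| ≤ B) :
    |∑ y ∈ s, ω y * exp (δ * y) - c / 2 * (exp (2 * δ * T) - exp (-(2 * δ * A)))| ≤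
      3 * B * exp (δ * T) := by
  have hB0 : 0 ≤ B := (abs_nonneg _).trans (hB T haT le_rfl)
  have hg : ContDiff ℝ 1 (fun t => exp (δ * t)) := by fun_prop
  have h := pb_abel2 s ω (fun t => exp (δ * t)) hg (-A) T c δ B hs haT hB
  have hder : ∀ k t : ℝ, HasDerivAt (fun t => exp (k * t)) (k * exp (k * t)) t := by
    intro k t
    have h0 : HasDerivAt (fun t => k * t) k t := by
      simpa using (hasDerivAt_id t).const_mul k
    rw [mul_comm]
    exact h0.exp
  have e1 : ∫ t in (-A)..T, c * δ * exp (δ * t) * exp (δ * t) =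
      c / 2 * (exp (2 * δ * T) - exp (-(2 * δ * A))) := by
    have e2 : ∀ t, c * δ * exp (δ * t) * exp (δ * t) = c / 2 * (2 * δ * exp (2 * δ * t)) := by
      intro t
      have : exp (2 * δ * t) = exp (δ * t) * exp (δ * t) := by rw [← exp_add]; ring_nf
      rw [this]; ring
    simp_rw [e2]
    rw [intervalIntegral.integral_const_mul,
      intervalIntegral.integral_eq_sub_of_hasDerivAt (fun t _ => hder (2 * δ) t)
        ((by fun_prop : Continuous _).intervalIntegrable _ _)]
    ring_nf
  have e3 : ∫ t in (-A)..T, |deriv (fun t => exp (δ * t)) t| ≤ exp (δ * T) := by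
    have : ∀ t, |deriv (fun t => exp (δ * t)) t| = δ * exp (δ * t) := by
      intro t; rw [(hder δ t).deriv, abs_of_pos (by positivity)]
    simp_rw [this]
    rw [intervalIntegral.integral_eq_sub_of_hasDerivAt (fun t _ => hder δ t)
        ((by fun_prop : Continuous _).intervalIntegrable _ _)]
    linarith [exp_pos (δ * -A)]
  rw [e1] at h
  refine h.trans ?_
  simp only [abs_of_pos (exp_pos _)]
  have e4 : exp (δ * -A) ≤ exp (δ * T) := by gcongr
  calc _ ≤ B * (exp (δ * T) + exp (δ * T) + exp (δ * T)) := by gcongr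
    _ = _ := by ring

lemma pb_est (f : ℝ → ℝ) (hf : ContDiff ℝ 1 f) (A K : ℝ) (hA : 0 < A)
    (hsupp : ∀ u, A ≤ |u| → f u = 0) (hK : ∀ u, |f u| ≤ K)
    (s : Finset ℝ) (ω : ℝ → ℝ) (p T c δ B : ℝ) (hδ : 0 < δ) (hc : 0 < c) (hp : 1 ≤ p)
    (hω : ∀ y ∈ s, 0 < ω y)
    (hs : ∀ y ∈ s, 0 ≤ y ∧ y ≤ T) (hT : 0 ≤ T)
    (hB : ∀ t, -A ≤ t → t ≤ T → |(∑ y ∈ s, if y ≤ t then ω y else 0) - c * exp (δ * t)| ≤ B) :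
    |p * (∑ x ∈ s, ∑ y ∈ s, ω x * ω y * f (p * (y - x)))
      - c * δ * (∫ u, f u) * ∑ x ∈ s, ω x * exp (δ * x)| ≤
    (∑ x ∈ s, ω x) * (p * (B * (K + ∫ u, |deriv f u|))) +
    c * δ * exp (δ * T) * ((∑ x ∈ s, ω x) * ((exp (δ * A / p) - 1) * ∫ u, |f u|) +
      (c * exp (δ * T) * (1 - exp (-(δ * A / p))) + 2 * B) * ((exp (δ * A) + 1) * ∫ u, |f u|)) := by
  have hp0 : 0 < p := by linarith
  have hB0 : 0 ≤ B := (abs_nonneg _).trans (hB T (by linarith) le_rfl)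
  have hK0 : 0 ≤ K := (abs_nonneg _).trans (hK 0)
  have hJ : 0 ≤ ∫ u, |f u| := MeasureTheory.integral_nonneg (fun _ => abs_nonneg _)
  have hL : 0 ≤ ∫ u, |deriv f u| := MeasureTheory.integral_nonneg (fun _ => abs_nonneg _)
  set I := ∫ u, f u
  set J := ∫ u, |f u|
  set L := ∫ u, |deriv f u|
  have hexp1 : 0 ≤ exp (δ * A / p) - 1 := by
    have := add_one_le_exp (δ * A / p)
    have : 0 ≤ δ * A / p := by positivity
    linarith
  -- pointwise bound
  have hpt : ∀ x ∈ s, |p * (∑ y ∈ s, ω y * f (p * (y - x))) - c * δ * exp (δ * x) * I| ≤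
      p * (B * (K + L)) + c * δ * exp (δ * T) * ((exp (δ * A / p) - 1) * J +
        (if x ≤ T - A / p then 0 else 1) * ((exp (δ * A) + 1) * J)) := by
    intro x hx
    obtain ⟨hx0, hxT⟩ := hs x hx
    have hg : ContDiff ℝ 1 (fun t => f (p * (t - x))) := by fun_prop
    have h1 := pb_abel2 s ω (fun t => f (p * (t - x))) hg (-A) T c δ B
      (fun y hy => ⟨by linarith [(hs y hy).1], (hs y hy).2⟩) (by linarith) hB
    have h2 := pb_bump f hf A K hA hsupp hK p x T hp hx0 hxT
    obtain ⟨h3, h4⟩ := pb_riem f hf.continuous A hA hsupp p x T c δ hp hx0 hxT hc hδ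
    have h5 : f (p * (-A - x)) = 0 := by
      apply hsupp
      rw [abs_of_nonpos (by nlinarith)]
      nlinarith
    simp only [h5, abs_zero, add_zero] at h1
    have h6 : |∑ y ∈ s, ω y * f (p * (y - x)) -
        ∫ t in (-A)..T, c * δ * exp (δ * t) * f (p * (t - x))| ≤ B * (K + L) :=
      h1.trans (by gcongr; exact hK _)
    have h7 : |p * (∫ t in (-A)..T, c * δ * exp (δ * t) * f (p * (t - x)))
      - c * δ * exp (δ * x) * I| ≤ c * δ * exp (δ * T) * ((exp (δ * A / p) - 1) * J +
        (if x ≤ T - A / p then 0 else 1) * ((exp (δ * A) + 1) * J)) := by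
      split_ifs with hc1
      · refine (h3 (by linarith)).trans ?_
        rw [zero_mul, add_zero]
        gcongr
      · refine h4.trans ?_
        rw [one_mul]
        have : (exp (δ * A) + 1) * J ≤ (exp (δ * A / p) - 1) * J + (exp (δ * A) + 1) * J := by
          have := mul_nonneg hexp1 hJ
          linarith
        gcongr
    have h8 : p * (∑ y ∈ s, ω y * f (p * (y - x))) - c * δ * exp (δ * x) * I =
      p * (∑ y ∈ s, ω y * f (p * (y - x)) -
        ∫ t in (-A)..T, c * δ * exp (δ * t) * f (p * (t - x))) +
      (p * (∫ t in (-A)..T, c * δ * exp (δ * t) * f (p * (t - x)))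
      - c * δ * exp (δ * x) * I) := by ring
    rw [h8]
    refine (abs_add_le _ _).trans (add_le_add ?_ h7)
    rw [abs_mul, abs_of_pos hp0]
    gcongr
  have hsum : p * (∑ x ∈ s, ∑ y ∈ s, ω x * ω y * f (p * (y - x)))
      - c * δ * I * ∑ x ∈ s, ω x * exp (δ * x) =
      ∑ x ∈ s, ω x * (p * (∑ y ∈ s, ω y * f (p * (y - x))) - c * δ * exp (δ * x) * I) := by
    rw [Finset.mul_sum, Finset.mul_sum, ← Finset.sum_sub_distrib]
    refine Finset.sum_congr rfl (fun x _ => ?_)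
    simp_rw [mul_assoc (ω x)]
    rw [← Finset.mul_sum]
    ring
  have hbd : ∑ x ∈ s, ω x * (if x ≤ T - A / p then 0 else 1) ≤
      c * exp (δ * T) * (1 - exp (-(δ * A / p))) + 2 * B := by
    have hAp : A / p ≤ A := div_le_self hA.le hp
    have hAp0 : 0 < A / p := by positivity
    have b1 := abs_le.1 (hB T (by linarith) le_rfl)
    have b2 := abs_le.1 (hB (T - A / p) (by linarith) (by linarith))
    have e1 : ∑ x ∈ s, ω x * (if x ≤ T - A / p then 0 else 1) =
      (∑ y ∈ s, if y ≤ T then ω y else 0) - ∑ y ∈ s, if y ≤ T - A / p then ω y else 0 := by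
      rw [← Finset.sum_sub_distrib]
      refine Finset.sum_congr rfl (fun x hx => ?_)
      rw [if_pos (hs x hx).2]
      split_ifs <;> simp
    have e2 : exp (δ * (T - A / p)) = exp (δ * T) * exp (-(δ * A / p)) := by
      rw [← exp_add]; ring_nf
    rw [e1]
    rw [e2] at b2
    linarith [b1.1, b1.2, b2.1, b2.2]
  rw [hsum]
  calc _ ≤ ∑ x ∈ s, |ω x * (p * (∑ y ∈ s, ω y * f (p * (y - x))) - c * δ * exp (δ * x) * I)| :=
        Finset.abs_sum_le_sum_abs _ _
    _ ≤ ∑ x ∈ s, ω x * (p * (B * (K + L)) + c * δ * exp (δ * T) * ((exp (δ * A / p) - 1) * J +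
        (if x ≤ T - A / p then 0 else 1) * ((exp (δ * A) + 1) * J))) := by
        refine Finset.sum_le_sum (fun x hx => ?_)
        rw [abs_mul, abs_of_pos (hω x hx)]
        exact mul_le_mul_of_nonneg_left (hpt x hx) (hω x hx).le
    _ = (∑ x ∈ s, ω x) * (p * (B * (K + L))) +
      c * δ * exp (δ * T) * ((∑ x ∈ s, ω x) * ((exp (δ * A / p) - 1) * J) +
      (∑ x ∈ s, ω x * (if x ≤ T - A / p then 0 else 1)) * ((exp (δ * A) + 1) * J)) := by
        simp only [Finset.sum_mul, Finset.mul_sum, ← Finset.sum_add_distrib]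
        refine Finset.sum_congr rfl (fun x _ => ?_)
        ring
    _ ≤ _ := by gcongr

lemma pb_global (E : Set ℝ) (hE : E ⊆ Set.Ici 0) (hfin : ∀ t : ℝ, (E ∩ Set.Iic t).Finite)
    (ω : ℝ → ℝ) (hω : ∀ x ∈ E, 0 < ω x)
    (c δ κ : ℝ) (hc : 0 < c) (hδ : 0 < δ) (hκ : 0 < κ)
    (hET : ∃ C : ℝ, ∃ t0 : ℝ, ∀ t ≥ t0,
      abs ((∑ x ∈ (hfin t).toFinset, ω x) - c * Real.exp (δ * t))
        ≤ C * Real.exp ((δ - κ) * t)) :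
    ∃ C k : ℝ, 0 ≤ C ∧ 0 < k ∧ k < δ ∧ ∀ t,
      |(∑ x ∈ (hfin t).toFinset, ω x) - c * exp (δ * t)| ≤ C * exp ((δ - k) * t) := by
  obtain ⟨C, t0, h⟩ := hET
  have hC : 0 ≤ C := by
    have := (abs_nonneg _).trans (h t0 le_rfl)
    exact nonneg_of_mul_nonneg_left this (exp_pos _)
  have hF0 : ∀ t, 0 ≤ ∑ x ∈ (hfin t).toFinset, ω x := fun t =>
    Finset.sum_nonneg (fun x hx => (hω x ((hfin t).mem_toFinset.1 hx).1).le)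
  set D := (∑ x ∈ (hfin t0).toFinset, ω x) + c * exp (δ * t0) with hD
  have hD0 : 0 ≤ D := add_nonneg (hF0 t0) (by positivity)
  have hk1 : min κ (δ / 2) ≤ κ := min_le_left _ _
  have hk2 : min κ (δ / 2) ≤ δ / 2 := min_le_right _ _
  have hk0 : 0 < min κ (δ / 2) := lt_min hκ (by linarith)
  refine ⟨C + c + D, min κ (δ / 2), by positivity, hk0, by linarith, ?_⟩
  generalize min κ (δ / 2) = k at *
  intro t
  have hex := exp_pos ((δ - k) * t)
  rcases lt_or_ge t 0 with ht | ht
  · have he : (hfin t).toFinset = ∅ := by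
      ext x
      simp only [Set.Finite.mem_toFinset, Finset.notMem_empty, iff_false]
      rintro ⟨h1, h2⟩
      have := hE h1
      simp only [Set.mem_Ici, Set.mem_Iic] at this h2
      linarith
    rw [he, Finset.sum_empty, zero_sub, abs_neg, abs_of_pos (by positivity)]
    have : exp (δ * t) ≤ exp ((δ - k) * t) := by
      apply exp_le_exp.2; nlinarith
    calc c * exp (δ * t) ≤ c * exp ((δ - k) * t) := by gcongr
      _ ≤ _ := by gcongr; linarith
  · rcases le_or_gt t0 t with h1 | h1
    · refine (h t h1).trans ?_
      have : exp ((δ - κ) * t) ≤ exp ((δ - k) * t) := by gcongr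
      calc C * exp ((δ - κ) * t) ≤ C * exp ((δ - k) * t) := by gcongr
        _ ≤ _ := by gcongr; linarith
    · have h2 : ∑ x ∈ (hfin t).toFinset, ω x ≤ ∑ x ∈ (hfin t0).toFinset, ω x := by
        apply Finset.sum_le_sum_of_subset_of_nonneg
        · intro x hx
          rw [Set.Finite.mem_toFinset] at hx ⊢
          exact ⟨hx.1, le_trans hx.2 h1.le⟩
        · intro x hx _
          exact (hω x ((hfin t0).mem_toFinset.1 hx).1).le
      have h3 : exp (δ * t) ≤ exp (δ * t0) := by gcongr
      have h4 : c * exp (δ * t) ≤ c * exp (δ * t0) := by gcongr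
      have h5 : 1 ≤ exp ((δ - k) * t) := one_le_exp (mul_nonneg (by linarith) ht)
      have h6 : 0 ≤ c * exp (δ * t) := by positivity
      have h7 : 0 ≤ c * exp (δ * t0) := by positivity
      have h8 : |(∑ x ∈ (hfin t).toFinset, ω x) - c * exp (δ * t)| ≤ D := by
        rw [abs_le]; constructor <;> linarith [hF0 t, hF0 t0]
      calc _ ≤ D := h8
        _ ≤ D * exp ((δ - k) * t) := le_mul_of_one_le_right hD0 h5
        _ ≤ _ := by gcongr; linarith

theorem poissonian_behaviour
    (E : Set ℝ) (hE : E ⊆ Set.Ici 0) (hfin : ∀ t : ℝ, (E ∩ Set.Iic t).Finite)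
    (ω : ℝ → ℝ) (hω : ∀ x ∈ E, 0 < ω x)
    (c δ κ : ℝ) (hc : 0 < c) (hδ : 0 < δ) (hκ : 0 < κ)
    (hET : ∃ C : ℝ, ∃ t0 : ℝ, ∀ t ≥ t0,
      abs ((∑ x ∈ (hfin t).toFinset, ω x) - c * Real.exp (δ * t))
        ≤ C * Real.exp ((δ - κ) * t))
    (ψ : ℕ → ℝ) (hψ1 : ∀ N, 1 ≤ ψ N) (hψtop : Tendsto ψ atTop atTop)
    (hψsub : ∀ γ > (0:ℝ), Tendsto (fun N : ℕ => ψ N / Real.exp (γ * N)) atTop (nhds 0)) :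
    ∀ f : ℝ → ℝ, ContDiff ℝ 1 f → HasCompactSupport f →
      Tendsto (fun N : ℕ =>
          (∑ x ∈ (hfin N).toFinset, ∑ y ∈ (hfin N).toFinset, ω x * ω y * f (ψ N * (y - x))) /
            ((∑ x ∈ (hfin N).toFinset, ω x) ^ 2 / ψ N))
        atTop (nhds (δ / 2 * ∫ t : ℝ, f t)) := by
  intro f hf hcs
  obtain ⟨C, k, hC, hk, hkδ, hglob⟩ := pb_global E hE hfin ω hω c δ κ hc hδ hκ hET
  obtain ⟨A, hA, hsupp⟩ : ∃ A : ℝ, 0 < A ∧ ∀ u, A ≤ |u| → f u = 0 := by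
    obtain ⟨R, hR, h⟩ := hcs.exists_pos_le_norm
    exact ⟨R, hR, fun u hu => h u hu⟩
  obtain ⟨K, hK⟩ : ∃ K : ℝ, ∀ u, |f u| ≤ K := hf.continuous.bounded_above_of_compact_support hcs
  set F : ℕ → ℝ := fun N => ∑ x ∈ (hfin N).toFinset, ω x with hF
  set S : ℕ → ℝ := fun N => ∑ x ∈ (hfin N).toFinset, ∑ y ∈ (hfin N).toFinset,
    ω x * ω y * f (ψ N * (y - x)) with hS
  set W : ℕ → ℝ := fun N => ∑ x ∈ (hfin N).toFinset, ω x * exp (δ * x) with hW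
  set I := ∫ t, f t
  -- bounds at level N
  have hmem : ∀ N : ℕ, ∀ y ∈ (hfin N).toFinset, 0 ≤ y ∧ y ≤ (N : ℝ) := by
    intro N y hy
    rw [Set.Finite.mem_toFinset] at hy
    exact ⟨hE hy.1, hy.2⟩
  have hB : ∀ N : ℕ, ∀ t, -A ≤ t → t ≤ (N : ℝ) →
      |(∑ y ∈ (hfin N).toFinset, if y ≤ t then ω y else 0) - c * exp (δ * t)| ≤
        C * exp ((δ - k) * N) := by
    intro N t _ ht
    have e : (∑ y ∈ (hfin N).toFinset, if y ≤ t then ω y else 0) =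
        ∑ y ∈ (hfin t).toFinset, ω y := by
      rw [← Finset.sum_filter]
      refine Finset.sum_congr ?_ (fun _ _ => rfl)
      ext x
      simp only [Finset.mem_filter, Set.Finite.mem_toFinset, Set.mem_inter_iff, Set.mem_Iic]
      constructor
      · rintro ⟨⟨h1, h2⟩, h3⟩; exact ⟨h1, h3⟩
      · rintro ⟨h1, h2⟩; exact ⟨⟨h1, h2.trans ht⟩, h2⟩
    rw [e]
    refine (hglob t).trans ?_
    have : 0 ≤ δ - k := by linarith
    gcongr
  have hest := fun N : ℕ => pb_est f hf A K hA hsupp hK (hfin N).toFinset ω (ψ N) N c δ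
    (C * exp ((δ - k) * N)) hδ hc (hψ1 N)
    (fun y hy => hω y ((hfin N).mem_toFinset.1 hy).1) (hmem N) (Nat.cast_nonneg N) (hB N)
  have hexs := fun N : ℕ => pb_expsum (hfin N).toFinset ω A N c δ
    (C * exp ((δ - k) * N)) hδ (fun y hy => ⟨by linarith [(hmem N y hy).1], (hmem N y hy).2⟩)
    (by linarith [(Nat.cast_nonneg N : (0:ℝ) ≤ N)]) (hB N)
  -- decay facts
  have hsplit : ∀ N : ℕ, exp ((δ - k) * N) = exp (δ * N) * exp (-(k * N)) := by
    intro N; rw [← exp_add]; ring_nf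
  have hsq : ∀ N : ℕ, exp (2 * δ * N) = exp (δ * N) * exp (δ * N) := by
    intro N; rw [← exp_add]; ring_nf
  have hq : Tendsto (fun N : ℕ => ψ N * exp (-(k * N))) atTop (nhds 0) := by
    refine (hψsub k hk).congr (fun N => ?_)
    rw [exp_neg, div_eq_mul_inv]
  have hlin : ∀ r : ℝ, 0 < r → Tendsto (fun N : ℕ => exp (-(r * N))) atTop (nhds 0) := by
    intro r hr
    exact tendsto_exp_neg_atTop_nhds_zero.comp
      (Tendsto.const_mul_atTop hr tendsto_natCast_atTop_atTop)
  have hq1 := hlin k hk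
  have hip : Tendsto (fun N : ℕ => δ * A / ψ N) atTop (nhds 0) := hψtop.const_div_atTop _
  have hε1 : Tendsto (fun N : ℕ => exp (δ * A / ψ N)) atTop (nhds 1) := by
    have := (continuous_exp.tendsto 0).comp hip
    simpa [Function.comp_def] using this
  have hε2 : Tendsto (fun N : ℕ => exp (-(δ * A / ψ N))) atTop (nhds 1) := by
    have := (continuous_exp.tendsto (-0)).comp hip.neg
    simpa [Function.comp_def] using this
  -- F / e^{δN} → c
  have hφ : Tendsto (fun N : ℕ => F N / exp (δ * N)) atTop (nhds c) := by
    rw [tendsto_iff_norm_sub_tendsto_zero]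
    refine squeeze_zero (fun _ => norm_nonneg _) (g := fun N : ℕ => C * exp (-(k * N))) ?_
      (by simpa using hq1.const_mul C)
    intro N
    have h1 := hglob N
    have hp := exp_pos (δ * (N:ℝ))
    have e : F N / exp (δ * N) - c = (F N - c * exp (δ * N)) / exp (δ * N) := by field_simp
    rw [e, norm_eq_abs, abs_div, abs_of_pos hp, div_le_iff₀ hp]
    refine h1.trans (le_of_eq ?_)
    rw [hsplit]; ring
  -- W / e^{2δN} → c / 2
  have hWl : Tendsto (fun N : ℕ => W N / exp (2 * δ * N)) atTop (nhds (c / 2)) := by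
    have hlim := (hq1.const_mul (3 * C)).add
      ((hlin (2 * δ) (by linarith)).const_mul (c / 2 * exp (-(2 * δ * A))))
    rw [tendsto_iff_norm_sub_tendsto_zero]
    refine squeeze_zero (fun _ => norm_nonneg _)
      (g := fun N : ℕ => 3 * C * exp (-(k * N)) + c / 2 * exp (-(2 * δ * A)) * exp (-(2 * δ * N)))
      ?_ (by simpa using hlim)
    intro N
    have hp := exp_pos (2 * δ * (N:ℝ))
    have e : W N / exp (2 * δ * N) - c / 2 =
      ((W N - c / 2 * (exp (2 * δ * N) - exp (-(2 * δ * A)))) - c / 2 * exp (-(2 * δ * A)))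
        / exp (2 * δ * N) := by field_simp; ring
    rw [e, norm_eq_abs, abs_div, abs_of_pos hp, div_le_iff₀ hp]
    refine (abs_sub _ _).trans ?_
    refine (add_le_add (hexs N) (le_of_eq (abs_of_pos (by positivity)))).trans (le_of_eq ?_)
    have e2 : exp (-(2 * δ * (N:ℝ))) * exp (2 * δ * N) = 1 := by rw [← exp_add]; simp
    rw [add_mul, mul_assoc (c / 2 * exp (-(2 * δ * A))), e2, hsplit, hsq]; ring
  -- ψ S / e^{2δN}
  have hSl : Tendsto (fun N : ℕ => ψ N * S N / exp (2 * δ * N)) atTop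
      (nhds (c * δ * I * (c / 2))) := by
    have hdiff : Tendsto (fun N : ℕ => ψ N * S N / exp (2 * δ * N)
        - c * δ * I * (W N / exp (2 * δ * N))) atTop (nhds 0) := by
      rw [tendsto_zero_iff_norm_tendsto_zero]
      set J := ∫ u, |f u|
      set L := ∫ u, |deriv f u|
      refine squeeze_zero (fun _ => norm_nonneg _)
        (g := fun N : ℕ => F N / exp (δ * N) * (ψ N * exp (-(k * N)) * (C * (K + L))) +
          c * δ * (F N / exp (δ * N) * ((exp (δ * A / ψ N) - 1) * J) +
          (c * (1 - exp (-(δ * A / ψ N))) + 2 * (C * exp (-(k * N)))) * ((exp (δ * A) + 1) * J)))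
        ?_ ?_
      · intro N
        have hp := exp_pos (2 * δ * (N:ℝ))
        have hp1 := exp_pos (δ * (N:ℝ))
        have e : ψ N * S N / exp (2 * δ * N) - c * δ * I * (W N / exp (2 * δ * N)) =
          (ψ N * S N - c * δ * I * W N) / exp (2 * δ * N) := by ring
        rw [e, norm_eq_abs, abs_div, abs_of_pos hp, div_le_iff₀ hp]
        refine (hest N).trans (le_of_eq ?_)
        rw [hsplit, hsq]
        change F N * _ + _ * (F N * _ + _) = _
        field_simp
      · have t1 := hφ.mul (hq.mul_const (C * (K + L)))
        have t2 := hφ.mul ((hε1.sub_const 1).mul_const J)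
        have t3 := (((hε2.const_sub 1).const_mul c).add
          ((hq1.const_mul C).const_mul 2)).mul_const ((exp (δ * A) + 1) * J)
        have t4 := t1.add ((t2.add t3).const_mul (c * δ))
        simpa using t4
    have := hdiff.add (hWl.const_mul (c * δ * I))
    simpa using this
  have hfinal := hSl.div (hφ.pow 2) (by positivity)
  have e : c * δ * I * (c / 2) / c ^ 2 = δ / 2 * I := by field_simp
  rw [e] at hfinal
  refine hfinal.congr (fun N => ?_)
  change ψ N * S N / exp (2 * δ * N) / (F N / exp (δ * N)) ^ 2 = S N / (F N ^ 2 / ψ N)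
  have hp1 := (exp_pos (δ * (N:ℝ))).ne'
  rw [hsq, div_pow, div_div_eq_mul_div, div_div_eq_mul_div]
  congr 1
  field_simp
end

section
/- Let 𝓔 be a locally finite subset of [0,∞) with weight function ω and growth function ω̃(t) = Σ_{x∈𝓔,x≤t} ω(x) satisfying ω̃(t) = c e^{δt}(1 + O(e^{-κt})) as t → ∞, with c, δ, κ > 0 and κ ≤ δ. Let A ≥ 1 and let f ∈ C¹(ℝ) have compact support in [-A, A]. Then as N → ∞, (1/ω̃(N)²) Σ_{x,y∈𝓔∩[0,N]} ω(x)ω(y) f(y-x) = ∫_ℝ f(t)(δ/2)e^{-δ|t|} dt + O(A e^{δA} e^{-κN/12} ‖f‖_∞) + O(A e^{-κN/4} ‖f'‖_∞). -/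
open Filter Real

open MeasureTheory Set Topology in
lemma pc_key (F : Finset ℝ) (ω : ℝ → ℝ) (c δ N D : ℝ) (hF : ∀ x ∈ F, x ≤ N)
    (hR : ∀ t ≤ N, |(∑ x ∈ F, if x ≤ t then ω x else 0) - c * Real.exp (δ * t)| ≤ D)
    (g : ℝ → ℝ) (hg : ContDiff ℝ 1 g) (a A : ℝ) (hA : 0 ≤ A)
    (hs : Function.support g ⊆ Icc (a - A) (a + A)) (M M' : ℝ)
    (hM : ∀ x, |g x| ≤ M) (hM' : ∀ x, |deriv g x| ≤ M') :
    |(∑ x ∈ F, ω x * g x) - ∫ t in Iic N, (c * δ * Real.exp (δ * t)) * g t|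
      ≤ D * (M + 2 * A * M') := by
  have hcs : HasCompactSupport g := HasCompactSupport.of_support_subset_isCompact isCompact_Icc hs
  have hcont := hg.continuous
  have hg' : Continuous (deriv g) := hg.continuous_deriv le_rfl
  have hcs' : HasCompactSupport (deriv g) := hcs.deriv
  have hi : Integrable (deriv g) := hg'.integrable_of_hasCompactSupport hcs'
  have hd : ∀ x, HasDerivAt g (deriv g x) x := fun x =>
    (hg.differentiable one_ne_zero x).hasDerivAt
  have hD : 0 ≤ D := (abs_nonneg _).trans (hR N le_rfl)
  have hint1 : ∀ x, IntegrableOn (fun t => (if x ≤ t then ω x else 0) * deriv g t) (Iic N) := by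
    intro x
    have : (fun t => (if x ≤ t then ω x else 0) * deriv g t)
        = (Ici x).indicator (fun t => ω x * deriv g t) := by
      ext t; simp [indicator]
    rw [this]
    exact ((hi.const_mul _).indicator measurableSet_Ici).integrableOn
  have h1 : ∀ x ∈ F, ω x * g x = ω x * g N -
      ∫ t in Iic N, (if x ≤ t then ω x else 0) * deriv g t := by
    intro x hx
    have e : (fun t => (if x ≤ t then ω x else 0) * deriv g t)
        = (Ici x).indicator (fun t => ω x * deriv g t) := by
      ext t; simp [indicator]
    rw [e, setIntegral_indicator measurableSet_Ici, inter_comm, Ici_inter_Iic,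
      integral_Icc_eq_integral_Ioc, ← intervalIntegral.integral_of_le (hF x hx),
      intervalIntegral.integral_const_mul,
      intervalIntegral.integral_eq_sub_of_hasDerivAt (fun t _ => hd t) (hi.intervalIntegrable)]
    ring
  have hS : ∑ x ∈ F, ω x * g x = (∑ x ∈ F, ω x) * g N -
      ∫ t in Iic N, (∑ x ∈ F, if x ≤ t then ω x else 0) * deriv g t := by
    rw [Finset.sum_congr rfl h1, Finset.sum_sub_distrib, Finset.sum_mul]
    congr 1
    simp_rw [Finset.sum_mul]
    rw [integral_finsetSum]
    intro x _; exact hint1 x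
  have hintS : IntegrableOn (fun t => (∑ x ∈ F, if x ≤ t then ω x else 0) * deriv g t) (Iic N) := by
    simp_rw [Finset.sum_mul]
    exact integrable_finsetSum _ fun x _ => hint1 x
  have hi2 : Integrable (fun t => (c * δ * Real.exp (δ * t)) * g t) :=
    Continuous.integrable_of_hasCompactSupport (by fun_prop) hcs.mul_left
  have hi3 : Integrable (fun t => (c * Real.exp (δ * t)) * deriv g t) :=
    Continuous.integrable_of_hasCompactSupport (by fun_prop) hcs'.mul_left
  have hG : (∫ t in Iic N, (c * δ * Real.exp (δ * t)) * g t) = c * Real.exp (δ * N) * g N -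
      ∫ t in Iic N, (c * Real.exp (δ * t)) * deriv g t := by
    have := integral_Iic_of_hasDerivAt_of_tendsto' (a := N) (m := 0)
      (f := fun t => (c * Real.exp (δ * t)) * g t)
      (f' := fun t => (c * δ * Real.exp (δ * t)) * g t + (c * Real.exp (δ * t)) * deriv g t)
      (fun t _ => by
        have h := ((((hasDerivAt_id t).const_mul δ).exp).const_mul c).mul (hd t)
        refine h.congr_deriv ?_
        simp only [id, mul_one]; ring)
      (hi2.add hi3).integrableOn ?_
    · rw [integral_add hi2.integrableOn hi3.integrableOn] at this
      linarith
    · apply tendsto_const_nhds.congr'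
      filter_upwards [eventually_lt_atBot (a - A)] with t ht
      have : g t = 0 := by
        by_contra h
        have := (hs h).1
        linarith
      simp [this]
  have hN : (∑ x ∈ F, if x ≤ N then ω x else 0) = ∑ x ∈ F, ω x :=
    Finset.sum_congr rfl fun x hx => by simp [hF x hx]
  have hRN := hR N le_rfl
  rw [hN] at hRN
  have e : (∑ x ∈ F, ω x * g x) - ∫ t in Iic N, (c * δ * Real.exp (δ * t)) * g t
      = ((∑ x ∈ F, ω x) - c * Real.exp (δ * N)) * g N -
      ∫ t in Iic N, ((∑ x ∈ F, if x ≤ t then ω x else 0) - c * Real.exp (δ * t)) * deriv g t := by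
    simp_rw [sub_mul]
    rw [integral_sub hintS hi3.integrableOn, hS, hG]
    ring
  have hz : ∀ t, t ∉ Icc (a - A) (a + A) → deriv g t = 0 := by
    intro t ht
    by_contra h
    have h1 : t ∈ tsupport (deriv g) := subset_tsupport _ h
    have h2 := tsupport_deriv_subset h1
    exact ht (closure_minimal hs isClosed_Icc h2)
  have hb : |∫ t in Iic N, ((∑ x ∈ F, if x ≤ t then ω x else 0) - c * Real.exp (δ * t)) * deriv g t|
      ≤ D * M' * (2 * A) := by
    have hbi : Integrable ((Icc (a - A) (a + A)).indicator (fun _ => D * M')) :=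
      (integrable_indicator_iff measurableSet_Icc).2
        (integrableOn_const (by simp))
    have hM0 : 0 ≤ M' := (abs_nonneg _).trans (hM' 0)
    rw [← Real.norm_eq_abs]
    refine (norm_integral_le_of_norm_le (g := (Icc (a - A) (a + A)).indicator (fun _ => D * M'))
      hbi.integrableOn ?_).trans ?_
    · filter_upwards [ae_restrict_mem measurableSet_Iic] with t ht
      by_cases h : t ∈ Icc (a - A) (a + A)
      · rw [indicator_of_mem h, norm_mul]
        exact mul_le_mul (hR t ht) (hM' t) (norm_nonneg _) hD
      · rw [indicator_of_notMem h, hz t h]; simp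
    · refine (setIntegral_le_integral hbi (Eventually.of_forall fun t => ?_)).trans ?_
      · exact indicator_nonneg (fun _ _ => by positivity) _
      · rw [integral_indicator measurableSet_Icc]
        simp [Measure.real, ENNReal.toReal_ofReal, hA]
        nlinarith
  rw [e]
  refine (abs_sub _ _).trans ?_
  rw [abs_mul]
  have := mul_le_mul hRN (hM N) (abs_nonneg _) hD
  linarith

open MeasureTheory Set Topology in
lemma pc_fubini (f : ℝ → ℝ) (hf : Continuous f) (hcs : HasCompactSupport f) (c δ N : ℝ) (hc : 0 < c)
    (hδ : 0 < δ) :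
    IntegrableOn (fun t => (c * δ * Real.exp (δ * t)) *
      ∫ s in Iic N, (c * δ * Real.exp (δ * s)) * f (t - s)) (Iic N) ∧
    (∫ t in Iic N, (c * δ * Real.exp (δ * t)) *
      ∫ s in Iic N, (c * δ * Real.exp (δ * s)) * f (t - s)) =
      (c * Real.exp (δ * N)) ^ 2 * ∫ t : ℝ, f t * (δ / 2 * Real.exp (-δ * |t|)) := by
  set m : ℝ → ℝ := (Iic N).indicator (fun t => c * δ * Real.exp (δ * t)) with hm
  have hmm : Measurable m := Measurable.indicator (by fun_prop) measurableSet_Iic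
  have hmi : Integrable m := by
    rw [hm, integrable_indicator_iff measurableSet_Iic]
    exact (integrableOn_exp_mul_Iic hδ N).const_mul _
  have hmb : ∀ t, ‖m t‖ ≤ c * δ * Real.exp (δ * N) := by
    intro t
    by_cases h : t ∈ Iic N
    · rw [hm, indicator_of_mem h, Real.norm_of_nonneg (by positivity)]
      have : t ≤ N := h
      gcongr
    · rw [hm, indicator_of_notMem h]; simp; positivity
  have hfi : Integrable f := hf.integrable_of_hasCompactSupport hcs
  have hin : ∀ t, (∫ s in Iic N, (c * δ * Real.exp (δ * s)) * f (t - s))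
      = ∫ u, m (t - u) * f u := by
    intro t
    rw [← integral_indicator measurableSet_Iic,
      ← integral_sub_left_eq_self (fun u => m (t - u) * f u) volume t]
    congr 1; ext s
    simp only [hm, sub_sub_cancel]
    by_cases h : s ∈ Iic N
    · simp only [indicator_of_mem h]
    · simp only [indicator_of_notMem h, zero_mul]
  have hH : Integrable (Function.uncurry fun t u => m (t - u) * (m t * f u)) (volume.prod volume) := by
    refine Integrable.bdd_mul (c := c * δ * Real.exp (δ * N)) (hmi.mul_prod hfi) ?_ ?_
    · exact (hmm.comp (by fun_prop : Measurable fun z : ℝ × ℝ => z.1 - z.2)).aestronglyMeasurable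
    · exact Eventually.of_forall fun z => hmb _
  have hout : (Iic N).indicator (fun t => (c * δ * Real.exp (δ * t)) *
      ∫ s in Iic N, (c * δ * Real.exp (δ * s)) * f (t - s))
      = fun t => ∫ u, m (t - u) * (m t * f u) := by
    ext t
    have : (∫ u, m (t - u) * (m t * f u)) = m t * ∫ u, m (t - u) * f u := by
      rw [← integral_const_mul]
      congr 1; ext u; ring
    rw [this, ← hin]
    by_cases h : t ∈ Iic N
    · simp only [hm, indicator_of_mem h]
    · simp only [hm, indicator_of_notMem h, zero_mul]
  constructor
  · rw [← integrable_indicator_iff measurableSet_Iic, hout]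
    exact hH.integral_prod_left
  · rw [← integral_indicator measurableSet_Iic, hout, integral_integral_swap hH,
      ← integral_const_mul]
    congr 1; ext u
    have e : (fun t => m (t - u) * (m t * f u)) = (Iic (min N (N + u))).indicator
        (fun t => (c ^ 2 * δ ^ 2 * Real.exp (-δ * u) * f u) * Real.exp ((2 * δ) * t)) := by
      ext t
      by_cases h1 : t ≤ N
      · by_cases h2 : t ≤ N + u
        · rw [indicator_of_mem (by simp [h1, h2])]
          simp only [hm]
          rw [indicator_of_mem (by simp; linarith), indicator_of_mem (by simpa using h1)]
          have : Real.exp (δ * (t - u)) * Real.exp (δ * t)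
            = Real.exp (-δ * u) * Real.exp ((2 * δ) * t) := by
            rw [← Real.exp_add, ← Real.exp_add]; congr 1; ring
          linear_combination c ^ 2 * δ ^ 2 * f u * this
        · rw [indicator_of_notMem (by simp [h2])]
          simp only [hm]
          rw [indicator_of_notMem (by simp at h2 ⊢; linarith)]; simp
      · rw [indicator_of_notMem (by simp [h1])]
        simp only [hm]
        rw [indicator_of_notMem (by simpa using h1) (f := fun t => c * δ * Real.exp (δ * t)) (a := t)]
        simp
    rw [e, integral_indicator measurableSet_Iic, integral_const_mul,
      integral_exp_mul_Iic (by positivity)]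
    have : Real.exp (-δ * u) * Real.exp (2 * δ * min N (N + u))
        = Real.exp (δ * N) ^ 2 * Real.exp (-δ * |u|) := by
      rw [← Real.exp_nat_mul, ← Real.exp_add, ← Real.exp_add]; congr 1
      rcases le_total 0 u with h | h
      · rw [min_eq_left (by linarith), abs_of_nonneg h]; push_cast; ring
      · rw [min_eq_right (by linarith), abs_of_nonpos h]; push_cast; ring
    have hh : δ ^ 2 * (1 / (2 * δ)) = δ / 2 := by field_simp
    rw [div_eq_mul_one_div (Real.exp (2 * δ * min N (N + u)))]
    linear_combination (c ^ 2 * f u * Real.exp (-δ * u) * Real.exp (2 * δ * min N (N + u))) * hh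
      + (c ^ 2 * δ / 2 * f u) * this

open MeasureTheory Set Topology in
lemma pc_main (F : Finset ℝ) (ω : ℝ → ℝ) (c δ N D : ℝ) (hc : 0 < c) (hδ : 0 < δ)
    (hF : ∀ x ∈ F, x ≤ N) (hω : ∀ x ∈ F, 0 ≤ ω x)
    (hR : ∀ t ≤ N, |(∑ x ∈ F, if x ≤ t then ω x else 0) - c * Real.exp (δ * t)| ≤ D)
    (f : ℝ → ℝ) (hf : ContDiff ℝ 1 f) (A : ℝ) (hA : 0 ≤ A)
    (hs : Function.support f ⊆ Icc (-A) A) (M M' : ℝ)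
    (hM : ∀ x, |f x| ≤ M) (hM' : ∀ x, |deriv f x| ≤ M') :
    |(∑ x ∈ F, ∑ y ∈ F, ω x * ω y * f (y - x)) -
      (c * Real.exp (δ * N)) ^ 2 * ∫ t : ℝ, f t * (δ / 2 * Real.exp (-δ * |t|))|
      ≤ ((∑ x ∈ F, ω x) + c * Real.exp (δ * N)) * (D * (M + 2 * A * M')) := by
  set B := D * (M + 2 * A * M') with hB
  have hcs : HasCompactSupport f := HasCompactSupport.of_support_subset_isCompact isCompact_Icc hs
  have hcont := hf.continuous
  have k1 : ∀ x, |(∑ y ∈ F, ω y * f (y - x)) -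
      ∫ t in Iic N, (c * δ * Real.exp (δ * t)) * f (t - x)| ≤ B := by
    intro x
    refine pc_key F ω c δ N D hF hR (fun t => f (t - x)) (by fun_prop) x A hA ?_ M M'
      (fun t => hM _) (fun t => ?_)
    · intro t ht
      have := hs (show f (t - x) ≠ 0 from ht)
      constructor <;> linarith [this.1, this.2]
    · rw [deriv_comp_sub_const]; exact hM' _
  have k2 : ∀ t, |(∑ x ∈ F, ω x * f (t - x)) -
      ∫ s in Iic N, (c * δ * Real.exp (δ * s)) * f (t - s)| ≤ B := by
    intro x
    refine pc_key F ω c δ N D hF hR (fun t => f (x - t)) (by fun_prop) x A hA ?_ M M'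
      (fun t => hM _) (fun t => ?_)
    · intro t ht
      have := hs (show f (x - t) ≠ 0 from ht)
      constructor <;> linarith [this.1, this.2]
    · rw [deriv_comp_const_sub, abs_neg]; exact hM' _
  have s1 : |(∑ x ∈ F, ∑ y ∈ F, ω x * ω y * f (y - x)) -
      ∑ x ∈ F, ω x * ∫ t in Iic N, (c * δ * Real.exp (δ * t)) * f (t - x)|
      ≤ (∑ x ∈ F, ω x) * B := by
    rw [← Finset.sum_sub_distrib, Finset.sum_mul]
    refine (Finset.abs_sum_le_sum_abs _ _).trans (Finset.sum_le_sum fun x hx => ?_)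
    have : (∑ y ∈ F, ω x * ω y * f (y - x)) = ω x * ∑ y ∈ F, ω y * f (y - x) := by
      rw [Finset.mul_sum]; exact Finset.sum_congr rfl fun y _ => by ring
    rw [this, ← mul_sub, abs_mul, abs_of_nonneg (hω x hx)]
    exact mul_le_mul_of_nonneg_left (k1 x) (hω x hx)
  have hint : ∀ x ∈ F, IntegrableOn
      (fun t => ω x * ((c * δ * Real.exp (δ * t)) * f (t - x))) (Iic N) := by
    intro x _
    refine (Integrable.const_mul ?_ _).integrableOn
    refine Continuous.integrable_of_hasCompactSupport (by fun_prop) ?_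
    refine HasCompactSupport.of_support_subset_isCompact (isCompact_Icc (a := x - A) (b := x + A)) ?_
    intro t ht
    have := hs (right_ne_zero_of_mul (show (c * δ * Real.exp (δ * t)) * f (t - x) ≠ 0 from ht))
    constructor <;> linarith [this.1, this.2]
  have s2 : (∑ x ∈ F, ω x * ∫ t in Iic N, (c * δ * Real.exp (δ * t)) * f (t - x))
      = ∫ t in Iic N, (c * δ * Real.exp (δ * t)) * ∑ x ∈ F, ω x * f (t - x) := by
    simp_rw [← integral_const_mul]
    rw [← integral_finsetSum _ hint]
    congr 1; ext t
    rw [Finset.mul_sum]; exact Finset.sum_congr rfl fun y _ => by ring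
  have hint2 : IntegrableOn
      (fun t => (c * δ * Real.exp (δ * t)) * ∑ x ∈ F, ω x * f (t - x)) (Iic N) := by
    refine (integrable_finsetSum _ hint).congr (Eventually.of_forall fun t => ?_)
    simp only
    rw [Finset.mul_sum]; exact Finset.sum_congr rfl fun y _ => by ring
  obtain ⟨fi, fe⟩ := pc_fubini f hcont hcs c δ N hc hδ
  have s3 : |(∑ x ∈ F, ω x * ∫ t in Iic N, (c * δ * Real.exp (δ * t)) * f (t - x)) -
      (c * Real.exp (δ * N)) ^ 2 * ∫ t : ℝ, f t * (δ / 2 * Real.exp (-δ * |t|))|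
      ≤ c * Real.exp (δ * N) * B := by
    rw [s2, ← fe, ← integral_sub hint2 fi]
    have hbi : IntegrableOn (fun t => (c * δ * B) * Real.exp (δ * t)) (Iic N) :=
      (integrableOn_exp_mul_Iic hδ N).const_mul _
    rw [← Real.norm_eq_abs]
    refine (norm_integral_le_of_norm_le hbi (Eventually.of_forall fun t => ?_)).trans ?_
    · rw [← mul_sub, norm_mul, Real.norm_of_nonneg (by positivity)]
      calc _ ≤ (c * δ * Real.exp (δ * t)) * B :=
            mul_le_mul_of_nonneg_left (k2 t) (by positivity)
        _ = _ := by ring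
    · rw [integral_const_mul, integral_exp_mul_Iic hδ]
      apply le_of_eq; field_simp
  refine (abs_sub_le _ _ _).trans ((add_le_add s1 s3).trans (le_of_eq (by ring)))

lemma pc_arith (S W G I ε Q P : ℝ) (hG : 0 < G) (hε : ε ≤ 1 / 2) (hε0 : 0 ≤ ε)
    (h1 : |W - G| ≤ ε * G)
    (h2 : |S - G ^ 2 * I| ≤ (W + G) * (ε * G * Q)) (h3 : |I| ≤ P) (hQ : 0 ≤ Q) :
    |S / W ^ 2 - I| ≤ 6 * ε * (Q + P) := by
  have hP : 0 ≤ P := (abs_nonneg _).trans h3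
  have hGW : G ≤ 2 * W := by
    have := (abs_le.1 h1).1
    nlinarith
  have hW : 0 < W := by linarith
  have e : S / W ^ 2 - I = (S - W ^ 2 * I) / W ^ 2 := by field_simp
  rw [e, abs_div, abs_of_pos (by positivity : 0 < W ^ 2), div_le_iff₀ (by positivity)]
  have h4 : |(G ^ 2 - W ^ 2) * I| ≤ (W + G) * (ε * G) * P := by
    have : (G ^ 2 - W ^ 2) * I = -((W + G) * (W - G) * I) := by ring
    rw [this, abs_neg, abs_mul, abs_mul, abs_of_pos (by positivity : 0 < W + G)]
    gcongr
  have h5 : |S - W ^ 2 * I| ≤ |S - G ^ 2 * I| + |(G ^ 2 - W ^ 2) * I| := by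
    have : S - W ^ 2 * I = (S - G ^ 2 * I) + (G ^ 2 - W ^ 2) * I := by ring
    rw [this]; exact abs_add_le _ _
  have h6 : (W + G) * G ≤ 6 * W ^ 2 := by nlinarith
  calc |S - W ^ 2 * I| ≤ ((W + G) * G) * (ε * (Q + P)) := by linarith
    _ ≤ (6 * W ^ 2) * (ε * (Q + P)) := by gcongr
    _ = _ := by ring

open MeasureTheory Set in
lemma pc_int_bound (f : ℝ → ℝ) (A δ M : ℝ) (hA : 0 ≤ A) (hδ : 0 < δ)
    (hs : Function.support f ⊆ Icc (-A) A) (hM : ∀ x, |f x| ≤ M) :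
    |∫ t : ℝ, f t * (δ / 2 * Real.exp (-δ * |t|))| ≤ A * δ * M := by
  have hM0 : 0 ≤ M := (abs_nonneg _).trans (hM 0)
  have hbi : Integrable ((Icc (-A) A).indicator (fun _ => M * (δ / 2))) :=
    (integrable_indicator_iff measurableSet_Icc).2 (integrableOn_const (by simp))
  rw [← Real.norm_eq_abs]
  refine (norm_integral_le_of_norm_le hbi (Eventually.of_forall fun t => ?_)).trans ?_
  · by_cases h : t ∈ Icc (-A) A
    · rw [indicator_of_mem h, norm_mul, Real.norm_of_nonneg (by positivity : 0 ≤ δ / 2 * _)]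
      have : Real.exp (-δ * |t|) ≤ 1 := Real.exp_le_one_iff.2 (by
        have := mul_nonneg hδ.le (abs_nonneg t); linarith)
      exact mul_le_mul (hM t) (by nlinarith) (by positivity) hM0
    · rw [indicator_of_notMem h]
      have : f t = 0 := by
        by_contra h'
        exact h (hs h')
      simp [this]
  · rw [integral_indicator measurableSet_Icc, setIntegral_const, Real.volume_real_Icc_of_le (by linarith)]
    apply le_of_eq; simp; ring

/-- Theorem 3.1 in the case `α = 0` and `ψ = 1`, with explicit error terms. -/
theorem pair_correlation_error_term
    (E : Set ℝ) (hE : E ⊆ Set.Ici 0) (hfin : ∀ t : ℝ, (E ∩ Set.Iic t).Finite)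
    (ω : ℝ → ℝ) (hω : ∀ x ∈ E, 0 < ω x)
    (c δ κ : ℝ) (hc : 0 < c) (hδ : 0 < δ) (hκ : 0 < κ) (hκδ : κ ≤ δ)
    (hET : ∃ C : ℝ, ∃ t0 : ℝ, ∀ t ≥ t0,
      abs ((∑ x ∈ (hfin t).toFinset, ω x) - c * Real.exp (δ * t))
        ≤ C * Real.exp ((δ - κ) * t)) :
    ∃ C' : ℝ, ∃ N0 : ℕ, ∀ A ≥ (1:ℝ), ∀ f : ℝ → ℝ, ContDiff ℝ 1 f →
      Function.support f ⊆ Set.Icc (-A) A →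
      ∀ Mf Mf' : ℝ, (∀ x, |f x| ≤ Mf) → (∀ x, |deriv f x| ≤ Mf') →
      ∀ N ≥ N0,
        abs ((∑ x ∈ (hfin N).toFinset, ∑ y ∈ (hfin N).toFinset, ω x * ω y * f (y - x)) /
              (∑ x ∈ (hfin N).toFinset, ω x) ^ 2 -
            ∫ t : ℝ, f t * (δ / 2 * Real.exp (-δ * |t|)))
          ≤ C' * A * Real.exp (δ * A) * Real.exp (-κ * N / 12) * Mf +
            C' * A * Real.exp (-κ * N / 4) * Mf' := by
  classical
  obtain ⟨C, t0, hC⟩ := hET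
  set W : ℝ → ℝ := fun t => ∑ x ∈ (hfin t).toFinset, ω x with hWdef
  have hmem : ∀ t x, x ∈ (hfin t).toFinset ↔ x ∈ E ∧ x ≤ t := by intro t x; simp
  have hWmono : ∀ s t, s ≤ t → W s ≤ W t := by
    intro s t hst
    refine Finset.sum_le_sum_of_subset_of_nonneg ?_ ?_
    · intro x hx
      rw [hmem] at hx ⊢
      exact ⟨hx.1, hx.2.trans hst⟩
    · intro x hx _
      exact (hω x ((hmem _ _).1 hx).1).le
  have hW0 : ∀ t, 0 ≤ W t := fun t => Finset.sum_nonneg fun x hx => (hω x ((hmem _ _).1 hx).1).le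
  obtain ⟨K, hK, hKb⟩ : ∃ K : ℝ, 0 < K ∧ ∀ t, |W t - c * Real.exp (δ * t)|
      ≤ K * Real.exp ((δ - κ) * t) := by
    refine ⟨|C| + c + (W t0 + c * Real.exp (δ * t0)), ?_, ?_⟩
    · have := hW0 t0
      positivity
    · intro t
      have hWt0 := hW0 t0
      have p1 : 0 ≤ |C| := abs_nonneg C
      have p2 : 0 < c * Real.exp (δ * t0) := by positivity
      have p3 := Real.exp_pos ((δ - κ) * t)
      by_cases h : t0 ≤ t
      · refine (hC t h).trans (mul_le_mul_of_nonneg_right ?_ p3.le)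
        linarith [le_abs_self C]
      · push Not at h
        by_cases h0 : t < 0
        · have : W t = 0 := by
            refine Finset.sum_eq_zero fun x hx => ?_
            have hx' := (hmem _ _).1 hx
            have : (0:ℝ) ≤ x := hE hx'.1
            linarith [hx'.2]
          rw [this, zero_sub, abs_neg, abs_of_pos (by positivity)]
          have : Real.exp (δ * t) ≤ Real.exp ((δ - κ) * t) := Real.exp_le_exp.2 (by nlinarith)
          calc c * Real.exp (δ * t) ≤ c * Real.exp ((δ - κ) * t) := by gcongr
            _ ≤ _ := mul_le_mul_of_nonneg_right (by linarith) p3.le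
        · push Not at h0
          have q1 : (1:ℝ) ≤ Real.exp ((δ - κ) * t) :=
            Real.one_le_exp (mul_nonneg (by linarith) h0)
          have q2 : c * Real.exp (δ * t) ≤ c * Real.exp (δ * t0) := by gcongr
          have q3 := hWmono t t0 h.le
          have q4 := hW0 t
          have q5 : 0 < c * Real.exp (δ * t) := by positivity
          calc |W t - c * Real.exp (δ * t)| ≤ W t0 + c * Real.exp (δ * t0) := by
                rw [abs_le]; constructor <;> linarith
            _ ≤ (|C| + c + (W t0 + c * Real.exp (δ * t0))) * 1 := by linarith
            _ ≤ _ := by gcongr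
  obtain ⟨N0, hN0⟩ : ∃ N0 : ℕ, ∀ n : ℕ, n ≥ N0 → K / c * Real.exp (-κ * n) ≤ 1 / 2 := by
    have h1 : Tendsto (fun n : ℕ => K / c * Real.exp (-κ * n)) atTop (nhds (K / c * 0)) := by
      refine Tendsto.const_mul _ (Real.tendsto_exp_atBot.comp ?_)
      exact (tendsto_natCast_atTop_atTop).const_mul_atTop_of_neg (by linarith)
    rw [mul_zero] at h1
    exact eventually_atTop.1 (h1.eventually (eventually_le_nhds (by norm_num : (0:ℝ) < 1 / 2)))
  refine ⟨12 * (K / c) * (1 + δ), N0, ?_⟩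
  intro A hA f hf hs M M' hM hM' N hN
  have hA0 : 0 ≤ A := by linarith
  have hM0 : 0 ≤ M := (abs_nonneg _).trans (hM 0)
  have hM0' : 0 ≤ M' := (abs_nonneg _).trans (hM' 0)
  set F := (hfin N).toFinset with hFdef
  have hWF : ∀ t ≤ (N:ℝ), (∑ x ∈ F, if x ≤ t then ω x else 0) = W t := by
    intro t ht
    rw [← Finset.sum_filter]
    refine Finset.sum_congr ?_ fun _ _ => rfl
    ext x
    rw [Finset.mem_filter, hmem, hmem]
    constructor
    · rintro ⟨⟨h1, h2⟩, h3⟩; exact ⟨h1, h3⟩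
    · rintro ⟨h1, h2⟩; exact ⟨⟨h1, h2.trans ht⟩, h2⟩
  set ε := K / c * Real.exp (-κ * N) with hε
  have hεG : K * Real.exp ((δ - κ) * N) = ε * (c * Real.exp (δ * N)) := by
    have : Real.exp ((δ - κ) * N) = Real.exp (-κ * N) * Real.exp (δ * N) := by
      rw [← Real.exp_add]; congr 1; ring
    rw [this, hε]; field_simp
  have hmain := pc_main F ω c δ N (K * Real.exp ((δ - κ) * N)) hc hδ
    (fun x hx => ((hmem _ _).1 hx).2) (fun x hx => (hω x ((hmem _ _).1 hx).1).le)
    (fun t ht => by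
      rw [hWF t ht]
      refine (hKb t).trans ?_
      have : (δ - κ) * t ≤ (δ - κ) * N := mul_le_mul_of_nonneg_left ht (by linarith)
      gcongr) f hf A hA0 hs M M' hM hM'
  rw [hεG] at hmain
  have hWN := hKb N
  rw [hεG] at hWN
  have hε0 : 0 ≤ ε := by positivity
  have hfinal := pc_arith _ _ _ _ ε (M + 2 * A * M') (A * δ * M) (by positivity) (hN0 N hN) hε0 hWN
    hmain (pc_int_bound f A δ M hA0 hδ hs hM) (by positivity)
  refine hfinal.trans ?_
  have hNn : (0:ℝ) ≤ N := Nat.cast_nonneg N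
  have e1 : Real.exp (-κ * N) ≤ Real.exp (-κ * N / 12) := Real.exp_le_exp.2 (by nlinarith)
  have e2 : Real.exp (-κ * N) ≤ Real.exp (-κ * N / 4) := Real.exp_le_exp.2 (by nlinarith)
  have e3 : 1 ≤ Real.exp (δ * A) := Real.one_le_exp (by positivity)
  have e4 : Real.exp (-κ * N) ≤ Real.exp (δ * A) * Real.exp (-κ * N / 12) := by
    nlinarith [Real.exp_pos (-κ * N / 12)]
  have a1 : 6 * ε * (M + 2 * A * M' + A * δ * M) =
      6 * (K / c) * (1 + A * δ) * M * Real.exp (-κ * N) +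
      12 * (K / c) * A * M' * Real.exp (-κ * N) := by rw [hε]; ring
  rw [a1]
  apply add_le_add
  · calc 6 * (K / c) * (1 + A * δ) * M * Real.exp (-κ * N)
        ≤ 12 * (K / c) * (A * (1 + δ)) * M * (Real.exp (δ * A) * Real.exp (-κ * N / 12)) := by
          gcongr
          · norm_num
          · linarith
      _ = _ := by ring
  · calc 12 * (K / c) * A * M' * Real.exp (-κ * N)
        ≤ 12 * (K / c) * A * M' * Real.exp (-κ * N / 4) := by gcongr
      _ ≤ (1 + δ) * (12 * (K / c) * A * M' * Real.exp (-κ * N / 4)) := by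
          have : 0 ≤ 12 * (K / c) * A * M' * Real.exp (-κ * N / 4) := by positivity
          nlinarith
      _ = _ := by ring
end
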